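/- If C₀ > 0 satisfies ‖u(0,·)‖²_{L²(ℝ)} + β‖∂ₓu(0,·)‖²_{L²(ℝ)} ≤ C₀, then for every t ≥ 0 and every x ∈ ℝ one has u(t,x)⁴ ≤ 4C₀²/β; equivalently, ‖u(t,·)‖_{L^∞(ℝ)} ≤ √2 · C₀^{1/2} · β^{−1/4}. -/

import Mathlib

open MeasureTheory

/-!
Multiplying the equation by `2 (u - β ∂ₓ²u)` puts the time derivative of `u² + β (∂ₓu)²` in
divergence form, up to the dissipation `-2ε ((∂ₓu)² + β (∂ₓ²u)²)` and the two cubic terms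
`2β (A + C - B) u ∂ₓu ∂ₓ²u` and `-β² (B + 2C) ∂ₓu (∂ₓ²u)²`. Both cubic terms vanish exactly when
`B = 2A/3` and `C = -A/3`, so that `∫ u² + β ∫ (∂ₓu)²` is nonincreasing in time. It controls
`√β ‖u‖_∞²`, because `u(x)² ≤ ∫ |u ∂ₓu|`.
-/

section PartialDerivatives

variable {E : Type*} [NormedAddCommGroup E] [NormedSpace ℝ E]

/-- The partial derivative `∂ₓ f` of a curried function `f` of time and space. -/
noncomputable def spaceDeriv (f : ℝ → ℝ → E) (t x : ℝ) : E :=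
  deriv (f t) x

/-- The partial derivative `∂ₜ f` of a curried function `f` of time and space. -/
noncomputable def timeDeriv (f : ℝ → ℝ → E) (t x : ℝ) : E :=
  deriv (fun s => f s x) t

end PartialDerivatives

local notation "∂ₓ" => spaceDeriv
local notation "∂ₜ" => timeDeriv

section PartialDerivatives

open Function

variable {E : Type*} [NormedAddCommGroup E] [NormedSpace ℝ E] {f : ℝ → ℝ → E} {m n : WithTop ℕ∞}

lemma spaceDeriv_eq_fderiv_uncurry {t x : ℝ} (hf : DifferentiableAt ℝ (uncurry f) (t, x)) :
    ∂ₓ f t x = fderiv ℝ (uncurry f) (t, x) (0, 1) :=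
  (hf.hasFDerivAt.comp_hasDerivAt x ((hasDerivAt_const x t).prodMk (hasDerivAt_id x))).deriv

lemma timeDeriv_eq_fderiv_uncurry {t x : ℝ} (hf : DifferentiableAt ℝ (uncurry f) (t, x)) :
    ∂ₜ f t x = fderiv ℝ (uncurry f) (t, x) (1, 0) :=
  (hf.hasFDerivAt.comp_hasDerivAt (f := fun s => (s, x)) t
    ((hasDerivAt_id t).prodMk (hasDerivAt_const t x))).deriv

lemma uncurry_spaceDeriv (hf : Differentiable ℝ (uncurry f)) :
    uncurry (∂ₓ f) = fun p => fderiv ℝ (uncurry f) p (0, 1) :=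
  funext fun p => spaceDeriv_eq_fderiv_uncurry (hf p)

lemma uncurry_timeDeriv (hf : Differentiable ℝ (uncurry f)) :
    uncurry (∂ₜ f) = fun p => fderiv ℝ (uncurry f) p (1, 0) :=
  funext fun p => timeDeriv_eq_fderiv_uncurry (hf p)

lemma contDiff_spaceDeriv (hf : ContDiff ℝ n (uncurry f)) (hmn : m + 1 ≤ n) :
    ContDiff ℝ m (uncurry (∂ₓ f)) := by
  rw [uncurry_spaceDeriv ((hf.of_le (le_add_self.trans hmn)).differentiable one_ne_zero)]
  exact (hf.fderiv_right hmn).clm_apply contDiff_const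

lemma contDiff_timeDeriv (hf : ContDiff ℝ n (uncurry f)) (hmn : m + 1 ≤ n) :
    ContDiff ℝ m (uncurry (∂ₜ f)) := by
  rw [uncurry_timeDeriv ((hf.of_le (le_add_self.trans hmn)).differentiable one_ne_zero)]
  exact (hf.fderiv_right hmn).clm_apply contDiff_const

lemma contDiff_space (hf : ContDiff ℝ n (uncurry f)) (t : ℝ) : ContDiff ℝ n (f t) :=
  hf.comp (contDiff_const.prodMk contDiff_id)

lemma contDiff_time (hf : ContDiff ℝ n (uncurry f)) (x : ℝ) : ContDiff ℝ n (fun t => f t x) :=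
  hf.comp (contDiff_id.prodMk contDiff_const)

lemma hasDerivAt_spaceDeriv (hf : ContDiff ℝ 1 (uncurry f)) (t x : ℝ) :
    HasDerivAt (f t) (∂ₓ f t x) x :=
  ((contDiff_space hf t).differentiable one_ne_zero x).hasDerivAt

lemma hasDerivAt_timeDeriv (hf : ContDiff ℝ 1 (uncurry f)) (t x : ℝ) :
    HasDerivAt (fun s => f s x) (∂ₜ f t x) t :=
  ((contDiff_time hf x).differentiable one_ne_zero t).hasDerivAt

lemma timeDeriv_spaceDeriv_comm (hf : ContDiff ℝ 2 (uncurry f)) :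
    ∂ₜ (∂ₓ f) = ∂ₓ (∂ₜ f) := by
  have hf₁ : Differentiable ℝ (uncurry f) := hf.differentiable two_ne_zero
  have hf₂ : Differentiable ℝ (fderiv ℝ (uncurry f)) :=
    (hf.fderiv_right (m := 1) one_add_one_eq_two.le).differentiable one_ne_zero
  funext t x
  rw [timeDeriv_eq_fderiv_uncurry
      ((contDiff_spaceDeriv hf one_add_one_eq_two.le).differentiable one_ne_zero _),
    spaceDeriv_eq_fderiv_uncurry
      ((contDiff_timeDeriv hf one_add_one_eq_two.le).differentiable one_ne_zero _),
    uncurry_spaceDeriv hf₁, uncurry_timeDeriv hf₁,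
    fderiv_clm_apply (hf₂ _) (differentiableAt_const _),
    fderiv_clm_apply (hf₂ _) (differentiableAt_const _)]
  simpa using hf.contDiffAt.isSymmSndFDerivAt (by simp) (1, 0) (0, 1)

lemma hasDerivAt_intervalIntegral_timeDeriv (hf : ContDiff ℝ 1 (uncurry f)) (a b t : ℝ) :
    HasDerivAt (fun s => ∫ x in a..b, f s x) (∫ x in a..b, ∂ₜ f t x) t := by
  have hft : Continuous (uncurry (∂ₜ f)) := (contDiff_timeDeriv hf (zero_add 1).le).continuous
  obtain ⟨M, hM⟩ := ((isCompact_closedBall t 1).prod (isCompact_uIcc (a := a) (b := b))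
    ).exists_bound_of_continuousOn hft.continuousOn
  refine (intervalIntegral.hasDerivAt_integral_of_dominated_loc_of_deriv_le
    (Metric.closedBall_mem_nhds t one_pos)
    (.of_forall fun s => (contDiff_space hf s).continuous.aestronglyMeasurable)
    ((contDiff_space hf t).continuous.intervalIntegrable a b)
    (hft.uncurry_left t).aestronglyMeasurable
    (bound := fun _ => M) (.of_forall fun x hx s hs => ?_) intervalIntegrable_const
    (.of_forall fun x _ s _ => hasDerivAt_timeDeriv hf s x)).2
  exact hM (s, x) ⟨hs, Set.uIoc_subset_uIcc hx⟩

lemma antitoneOn_intervalIntegral_of_timeDeriv_le_spaceDeriv {e F : ℝ → ℝ → ℝ} {D : Set ℝ}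
    {a b : ℝ} (hD : Convex ℝ D) (hab : a ≤ b) (he : ContDiff ℝ 1 (uncurry e))
    (hF : ∀ t ∈ D, ContDiff ℝ 1 (F t)) (heF : ∀ t ∈ D, ∀ x ∈ Set.Icc a b, ∂ₜ e t x ≤ ∂ₓ F t x)
    (hFab : ∀ t ∈ D, F t b ≤ F t a) :
    AntitoneOn (fun t => ∫ x in a..b, e t x) D := by
  have hderiv := hasDerivAt_intervalIntegral_timeDeriv he a b
  refine antitoneOn_of_deriv_nonpos hD (fun t _ => (hderiv t).continuousAt.continuousWithinAt)
    (fun t _ => (hderiv t).differentiableAt.differentiableWithinAt) fun t ht => ?_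
  replace ht := interior_subset ht
  have het : Continuous (∂ₜ e t) :=
    (contDiff_timeDeriv he (zero_add 1).le).continuous.uncurry_left t
  have hFx : Continuous (∂ₓ F t) := (hF t ht).continuous_deriv le_rfl
  calc deriv (fun t => ∫ x in a..b, e t x) t
      = ∫ x in a..b, ∂ₜ e t x := (hderiv t).deriv
    _ ≤ ∫ x in a..b, ∂ₓ F t x := intervalIntegral.integral_mono_on hab
        (het.intervalIntegrable a b) (hFx.intervalIntegrable a b) (heF t ht)
    _ = F t b - F t a := intervalIntegral.integral_deriv_eq_sub
        (fun x _ => (hF t ht).differentiable one_ne_zero x) (hFx.intervalIntegrable a b)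
    _ ≤ 0 := sub_nonpos.2 (hFab t ht)

end PartialDerivatives

section Sobolev

variable {f : ℝ → ℝ}

lemma sq_le_integral_abs_mul_deriv (hf : Differentiable ℝ f) (hf₂ : MemLp f 2)
    (hf₂' : MemLp (deriv f) 2) (x : ℝ) : f x ^ 2 ≤ ∫ y, |f y * deriv f y| := by
  have hderiv (y : ℝ) : HasDerivAt (fun y => f y ^ 2) (2 * (f y * deriv f y)) y := by
    simpa [mul_assoc] using (hf y).hasDerivAt.fun_pow 2
  have hint : Integrable fun y => f y * deriv f y := hf₂.integrable_mul hf₂'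
  have hint₂ : Integrable fun y => 2 * (f y * deriv f y) := hint.const_mul 2
  have hIic : ∫ y in Set.Iic x, 2 * (f y * deriv f y) = f x ^ 2 - 0 :=
    integral_Iic_of_hasDerivAt_of_tendsto' (fun y _ => hderiv y) hint₂.integrableOn
      (tendsto_zero_of_hasDerivAt_of_integrableOn_Iic (a := x) (fun y _ => hderiv y)
        hint₂.integrableOn hf₂.integrable_sq.integrableOn)
  have hIoi : ∫ y in Set.Ioi x, 2 * (f y * deriv f y) = 0 - f x ^ 2 :=
    integral_Ioi_of_hasDerivAt_of_tendsto' (fun y _ => hderiv y) hint₂.integrableOn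
      (tendsto_zero_of_hasDerivAt_of_integrableOn_Ioi (a := x) (fun y _ => hderiv y)
        hint₂.integrableOn hf₂.integrable_sq.integrableOn)
  have hleft : ∫ y in Set.Iic x, f y * deriv f y ≤ ∫ y in Set.Iic x, |f y * deriv f y| :=
    (le_abs_self _).trans abs_integral_le_integral_abs
  have hright : -∫ y in Set.Ioi x, f y * deriv f y ≤ ∫ y in Set.Ioi x, |f y * deriv f y| :=
    (neg_le_abs _).trans abs_integral_le_integral_abs
  rw [integral_const_mul] at hIic hIoi
  rw [← intervalIntegral.integral_Iic_add_Ioi hint.abs.integrableOn hint.abs.integrableOn (b := x)]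
  linarith

lemma two_mul_sq_le_integral_sq_add_integral_deriv_sq (hf : Differentiable ℝ f) (hf₂ : MemLp f 2)
    (hf₂' : MemLp (deriv f) 2) {c : ℝ} (hc : 0 ≤ c) (x : ℝ) :
    2 * c * f x ^ 2 ≤ (∫ y, f y ^ 2) + c ^ 2 * ∫ y, deriv f y ^ 2 := by
  calc 2 * c * f x ^ 2
      ≤ 2 * c * ∫ y, |f y * deriv f y| := by
        gcongr
        exact sq_le_integral_abs_mul_deriv hf hf₂ hf₂' x
    _ = ∫ y, 2 * c * |f y * deriv f y| := (integral_const_mul _ _).symm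
    _ ≤ ∫ y, (f y ^ 2 + c ^ 2 * deriv f y ^ 2) := by
        refine integral_mono ((hf₂.integrable_mul hf₂').abs.const_mul _)
          (hf₂.integrable_sq.add (hf₂'.integrable_sq.const_mul _)) fun y => ?_
        have := sq_nonneg (|f y| - c * |deriv f y|)
        rw [sub_sq, mul_pow, sq_abs, sq_abs] at this
        simp only [abs_mul]
        linarith
    _ = (∫ y, f y ^ 2) + c ^ 2 * ∫ y, deriv f y ^ 2 := by
        rw [integral_add hf₂.integrable_sq (hf₂'.integrable_sq.const_mul _), integral_const_mul]

end Sobolev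

section FourthRoot

variable {β C y : ℝ}

lemma pow_four_le_div_of_sqrt_mul_sq_le (hβ : 0 < β) (h : √β * y ^ 2 ≤ C) :
    y ^ 4 ≤ C ^ 2 / β := by
  rw [le_div_iff₀' hβ]
  calc β * y ^ 4 = (√β * y ^ 2) ^ 2 := by rw [mul_pow, Real.sq_sqrt hβ.le]; ring
    _ ≤ C ^ 2 := by gcongr

lemma abs_le_sqrt_mul_rpow_of_sqrt_mul_sq_le (hβ : 0 < β) (h : √β * y ^ 2 ≤ C) :
    |y| ≤ √C * β ^ (-(1 / 4 : ℝ)) := by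
  have hroot : β ^ (-(1 / 4 : ℝ)) = (√√β)⁻¹ := by
    rw [Real.rpow_neg hβ.le, Real.sqrt_eq_rpow, Real.sqrt_eq_rpow, ← Real.rpow_mul hβ.le]
    norm_num
  rw [hroot, ← div_eq_mul_inv, ← Real.sqrt_div' C (Real.sqrt_nonneg β)]
  exact Real.abs_le_sqrt ((le_div_iff₀' (Real.sqrt_pos.2 hβ)).2 h)

end FourthRoot

namespace KudryashovSinelshchikov

open Function

variable {A B C ε β : ℝ} {u : ℝ → ℝ → ℝ}

/-- The Kudryashov–Sinelshchikov equation at the point `(t, x)`, for the parameters `A`, `B`, `C`,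
`ε`, `β` of the paper and `D = 0`. -/
def SolvesAt (A B C ε β : ℝ) (u : ℝ → ℝ → ℝ) (t x : ℝ) : Prop :=
  ∂ₜ u t x + A * u t x * ∂ₓ u t x + β * ∂ₓ (∂ₓ (∂ₓ u)) t x
    - B * β * ∂ₓ (fun s y => u s y * ∂ₓ (∂ₓ u) s y) t x
    - C * β * ∂ₓ u t x * ∂ₓ (∂ₓ u) t x - ε * ∂ₓ (∂ₓ u) t x = 0

/-- The energy `‖f‖² + β ‖f'‖²` of a profile `f`, with norms in `L²(ℝ)`. -/
noncomputable def energy (β : ℝ) (f : ℝ → ℝ) : ℝ :=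
  (∫ x, f x ^ 2) + β * ∫ x, deriv f x ^ 2

/-- The energy density `u² + β (∂ₓu)²`, whose integral over space is the energy of `u(t,·)`. -/
noncomputable def energyDensity (β : ℝ) (u : ℝ → ℝ → ℝ) (t x : ℝ) : ℝ :=
  u t x ^ 2 + β * ∂ₓ u t x ^ 2

/-- The flux whose space derivative collects the exact derivatives in the time derivative of the
energy density along the equation. It depends on `∂ₜu` because `∂ₓu ∂ₜ∂ₓu` is integrated by
parts. -/
noncomputable def energyFlux (A B ε β : ℝ) (u : ℝ → ℝ → ℝ) (t x : ℝ) : ℝ :=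
  -(2 * A / 3) * u t x ^ 3 - 2 * β * (u t x * ∂ₓ (∂ₓ u) t x) + β * ∂ₓ u t x ^ 2
    + 2 * B * β * (u t x ^ 2 * ∂ₓ (∂ₓ u) t x) - B * β ^ 2 * (u t x * ∂ₓ (∂ₓ u) t x ^ 2)
    + β ^ 2 * ∂ₓ (∂ₓ u) t x ^ 2 + 2 * ε * (u t x * ∂ₓ u t x) + 2 * β * (∂ₓ u t x * ∂ₜ u t x)

lemma contDiff_energyDensity (hu : ContDiff ℝ 2 (uncurry u)) (β : ℝ) :
    ContDiff ℝ 1 (uncurry (energyDensity β u)) :=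
  ((hu.of_le one_le_two).pow 2).add
    (contDiff_const.mul ((contDiff_spaceDeriv hu one_add_one_eq_two.le).pow 2))

lemma contDiff_energyFlux (hu : ContDiff ℝ 3 (uncurry u)) (A B ε β t : ℝ) :
    ContDiff ℝ 1 (energyFlux A B ε β u t) := by
  have hux : ContDiff ℝ 2 (uncurry (∂ₓ u)) := contDiff_spaceDeriv hu two_add_one_eq_three.le
  have h₀ : ContDiff ℝ 1 (u t) := contDiff_space (hu.of_le (by norm_num)) t
  have h₁ : ContDiff ℝ 1 (∂ₓ u t) := contDiff_space (hux.of_le one_le_two) t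
  have h₂ : ContDiff ℝ 1 (∂ₓ (∂ₓ u) t) :=
    contDiff_space (contDiff_spaceDeriv hux one_add_one_eq_two.le) t
  have hₜ : ContDiff ℝ 1 (∂ₜ u t) := contDiff_space (contDiff_timeDeriv hu (by norm_num)) t
  unfold energyFlux
  fun_prop

lemma timeDeriv_energyDensity (hu : ContDiff ℝ 2 (uncurry u)) (β t x : ℝ) :
    ∂ₜ (energyDensity β u) t x
      = 2 * u t x * ∂ₜ u t x + 2 * β * ∂ₓ u t x * ∂ₓ (∂ₜ u) t x := by
  have hu_t := hasDerivAt_timeDeriv (hu.of_le one_le_two) t x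
  have hux_t := hasDerivAt_timeDeriv (contDiff_spaceDeriv hu one_add_one_eq_two.le) t x
  rw [← timeDeriv_spaceDeriv_comm hu]
  refine ((hu_t.fun_pow 2).add ((hux_t.fun_pow 2).const_mul β)).deriv.trans ?_
  push_cast
  ring

lemma spaceDeriv_energyFlux (hu : ContDiff ℝ 3 (uncurry u)) (A B ε β t x : ℝ) :
    ∂ₓ (energyFlux A B ε β u) t x
      = -2 * A * u t x ^ 2 * ∂ₓ u t x - 2 * β * u t x * ∂ₓ (∂ₓ (∂ₓ u)) t x
        + 2 * B * β * (2 * u t x * ∂ₓ u t x * ∂ₓ (∂ₓ u) t x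
          + u t x ^ 2 * ∂ₓ (∂ₓ (∂ₓ u)) t x)
        - B * β ^ 2 * (∂ₓ u t x * ∂ₓ (∂ₓ u) t x ^ 2
          + 2 * u t x * ∂ₓ (∂ₓ u) t x * ∂ₓ (∂ₓ (∂ₓ u)) t x)
        + 2 * β ^ 2 * ∂ₓ (∂ₓ u) t x * ∂ₓ (∂ₓ (∂ₓ u)) t x
        + 2 * ε * (∂ₓ u t x ^ 2 + u t x * ∂ₓ (∂ₓ u) t x)
        + 2 * β * (∂ₓ (∂ₓ u) t x * ∂ₜ u t x + ∂ₓ u t x * ∂ₓ (∂ₜ u) t x) := by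
  have hux : ContDiff ℝ 2 (uncurry (∂ₓ u)) := contDiff_spaceDeriv hu two_add_one_eq_three.le
  have h₀ := hasDerivAt_spaceDeriv (hu.of_le (by norm_num)) t x
  have h₁ := hasDerivAt_spaceDeriv (hux.of_le one_le_two) t x
  have h₂ := hasDerivAt_spaceDeriv (contDiff_spaceDeriv hux one_add_one_eq_two.le) t x
  have hₜ := hasDerivAt_spaceDeriv (contDiff_timeDeriv hu (m := 1) (by norm_num)) t x
  refine ((((((((((h₀.fun_pow 3).const_mul (-(2 * A / 3))).sub
    ((h₀.fun_mul h₂).const_mul (2 * β))).add ((h₁.fun_pow 2).const_mul β)).add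
    (((h₀.fun_pow 2).fun_mul h₂).const_mul (2 * B * β))).sub
    ((h₀.fun_mul (h₂.fun_pow 2)).const_mul (B * β ^ 2))).add
    ((h₂.fun_pow 2).const_mul (β ^ 2))).add
    ((h₀.fun_mul h₁).const_mul (2 * ε))).add
    ((h₁.fun_mul hₜ).const_mul (2 * β))).deriv).trans ?_
  push_cast
  ring

theorem timeDeriv_energyDensity_eq (hu : ContDiff ℝ 3 (uncurry u)) {t x : ℝ}
    (hsol : SolvesAt A B C ε β u t x) :
    ∂ₜ (energyDensity β u) t x
      = ∂ₓ (energyFlux A B ε β u) t x - 2 * ε * energyDensity β (∂ₓ u) t x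
        + 2 * β * (A + C - B) * (u t x * ∂ₓ u t x * ∂ₓ (∂ₓ u) t x)
        - β ^ 2 * (B + 2 * C) * (∂ₓ u t x * ∂ₓ (∂ₓ u) t x ^ 2) := by
  have hux : ContDiff ℝ 2 (uncurry (∂ₓ u)) := contDiff_spaceDeriv hu two_add_one_eq_three.le
  have h₀ := hasDerivAt_spaceDeriv (hu.of_le (by norm_num)) t x
  have h₂ := hasDerivAt_spaceDeriv (contDiff_spaceDeriv hux one_add_one_eq_two.le) t x
  have hprod : ∂ₓ (fun s y => u s y * ∂ₓ (∂ₓ u) s y) t x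
      = ∂ₓ u t x * ∂ₓ (∂ₓ u) t x + u t x * ∂ₓ (∂ₓ (∂ₓ u)) t x := (h₀.fun_mul h₂).deriv
  rw [SolvesAt, hprod] at hsol
  rw [timeDeriv_energyDensity (hu.of_le (by norm_num)), spaceDeriv_energyFlux hu, energyDensity]
  linear_combination (2 * u t x - 2 * β * ∂ₓ (∂ₓ u) t x) * hsol

lemma timeDeriv_energyDensity_le (hε : 0 ≤ ε) (hβ : 0 ≤ β) (hu : ContDiff ℝ 3 (uncurry u))
    {t x : ℝ} (hsol : SolvesAt A (2 * A / 3) (-(A / 3)) ε β u t x) :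
    ∂ₜ (energyDensity β u) t x ≤ ∂ₓ (energyFlux A (2 * A / 3) ε β u) t x := by
  have hdissipation : 0 ≤ 2 * ε * energyDensity β (∂ₓ u) t x := by
    unfold energyDensity
    positivity
  linarith [timeDeriv_energyDensity_eq hu hsol]

lemma energyFlux_eq_zero {t x : ℝ} (hx : x ∉ tsupport (u t)) (A B ε β : ℝ) :
    energyFlux A B ε β u t x = 0 := by
  have h₀ : u t x = 0 := image_eq_zero_of_notMem_tsupport hx
  have hx₁ : x ∉ tsupport (∂ₓ u t) := fun h => hx (tsupport_deriv_subset h)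
  have h₁ : ∂ₓ u t x = 0 := image_eq_zero_of_notMem_tsupport hx₁
  have h₂ : ∂ₓ (∂ₓ u) t x = 0 :=
    image_eq_zero_of_notMem_tsupport fun h => hx₁ (tsupport_deriv_subset h)
  simp [energyFlux, h₀, h₁, h₂]

lemma intervalIntegral_energyDensity {t a b : ℝ} (hu : ContDiff ℝ 1 (u t))
    (hsupp : tsupport (u t) ⊆ Set.Ioc a b) (β : ℝ) :
    ∫ x in a..b, energyDensity β u t x = energy β (u t) := by
  have hsq : ∫ x in a..b, u t x ^ 2 = ∫ x, u t x ^ 2 := by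
    apply intervalIntegral.integral_eq_integral_of_support_subset
    rw [support_pow _ two_ne_zero]
    exact (subset_tsupport _).trans hsupp
  have hderiv_sq : ∫ x in a..b, deriv (u t) x ^ 2 = ∫ x, deriv (u t) x ^ 2 := by
    apply intervalIntegral.integral_eq_integral_of_support_subset
    rw [support_pow _ two_ne_zero]
    exact support_deriv_subset.trans hsupp
  have hint : IntervalIntegrable (fun x => u t x ^ 2) volume a b :=
    (hu.continuous.pow 2).intervalIntegrable a b
  have hderiv_int : IntervalIntegrable (fun x => deriv (u t) x ^ 2) volume a b :=
    ((hu.continuous_deriv le_rfl).pow 2).intervalIntegrable a b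
  simp only [energyDensity, spaceDeriv, energy]
  rw [intervalIntegral.integral_add hint (hderiv_int.const_mul β),
    intervalIntegral.integral_const_mul, hsq, hderiv_sq]

theorem antitoneOn_energy {D K : Set ℝ} (hε : 0 ≤ ε) (hβ : 0 ≤ β)
    (hu : ContDiff ℝ 3 (uncurry u)) (hD : Convex ℝ D) (hK : IsCompact K)
    (hsupp : ∀ t ∈ D, tsupport (u t) ⊆ K)
    (hsol : ∀ t ∈ D, ∀ x, SolvesAt A (2 * A / 3) (-(A / 3)) ε β u t x) :
    AntitoneOn (fun t => energy β (u t)) D := by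
  obtain ⟨r, hr, hKr⟩ := hK.isBounded.subset_ball_lt 0 0
  rw [Real.ball_eq_Ioo, zero_sub, zero_add] at hKr
  have hflux (t : ℝ) (ht : t ∈ D) (x : ℝ) (hx : x ∉ Set.Ioo (-r) r) :
      energyFlux A (2 * A / 3) ε β u t x = 0 :=
    energyFlux_eq_zero (fun h => hx (hKr (hsupp t ht h))) _ _ _ _
  have hanti : AntitoneOn (fun t => ∫ x in -r..r, energyDensity β u t x) D :=
    antitoneOn_intervalIntegral_of_timeDeriv_le_spaceDeriv hD (neg_le_self hr.le)
      (contDiff_energyDensity (hu.of_le (by norm_num)) β)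
      (fun t _ => contDiff_energyFlux hu A (2 * A / 3) ε β t)
      (fun t ht x _ => timeDeriv_energyDensity_le hε hβ hu (hsol t ht x))
      (fun t ht => by rw [hflux t ht r (by simp), hflux t ht (-r) (by simp)])
  exact hanti.congr fun t ht => intervalIntegral_energyDensity
    (contDiff_space (hu.of_le (by norm_num)) t)
    ((hsupp t ht).trans (hKr.trans Set.Ioo_subset_Ioc_self)) β

theorem two_mul_sqrt_mul_sq_le_energy {f : ℝ → ℝ} (hβ : 0 ≤ β) (hf : ContDiff ℝ 1 f)
    (hsupp : HasCompactSupport f) (x : ℝ) : 2 * √β * f x ^ 2 ≤ energy β f := by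
  have hdf : Continuous (deriv f) := hf.continuous_deriv le_rfl
  simpa only [energy, Real.sq_sqrt hβ] using
    two_mul_sq_le_integral_sq_add_integral_deriv_sq (hf.differentiable one_ne_zero)
      (hf.continuous.memLp_of_hasCompactSupport hsupp)
      (hdf.memLp_of_hasCompactSupport hsupp.deriv) (Real.sqrt_nonneg β) x

end KudryashovSinelshchikov

open KudryashovSinelshchikov in
theorem stmt_2_general
    {A ε β C₀ T : ℝ} (hε : 0 ≤ ε) (hβ : 0 < β) {u : ℝ → ℝ → ℝ}
    (hu : ContDiff ℝ 3 (Function.uncurry u))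
    (hsupp : ∃ R : ℝ, ∀ t ∈ Set.Icc 0 T, ∀ x : ℝ, R ≤ |x| → u t x = 0)
    (hPDE : ∀ t ∈ Set.Icc 0 T, ∀ x : ℝ, SolvesAt A (2 * A / 3) (-(A / 3)) ε β u t x)
    (hC₀ : energy β (u 0) ≤ C₀) {t : ℝ} (ht : t ∈ Set.Icc 0 T) (x : ℝ) :
    u t x ^ 4 ≤ 4 * C₀ ^ 2 / β ∧ |u t x| ≤ √2 * √C₀ * β ^ (-(1 / 4 : ℝ)) := by
  obtain ⟨R, hR⟩ := hsupp
  have hK : IsCompact (Metric.closedBall (0 : ℝ) R) := isCompact_closedBall 0 R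
  have htsupp (s : ℝ) (hs : s ∈ Set.Icc 0 T) : tsupport (u s) ⊆ Metric.closedBall 0 R := by
    refine closure_minimal (fun y hy => ?_) hK.isClosed
    rw [mem_closedBall_zero_iff, Real.norm_eq_abs]
    exact (not_le.1 fun h => hy (hR s hs y h)).le
  have henergy : energy β (u t) ≤ C₀ :=
    (antitoneOn_energy hε hβ.le hu (convex_Icc 0 T) hK htsupp hPDE
      ⟨le_rfl, ht.1.trans ht.2⟩ ht ht.1).trans hC₀
  have hsobolev : 2 * √β * u t x ^ 2 ≤ energy β (u t) :=
    two_mul_sqrt_mul_sq_le_energy hβ.le (contDiff_space (hu.of_le (by norm_num)) t)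
      (hK.of_isClosed_subset (isClosed_tsupport _) (htsupp t ht)) x
  have hbound : √β * u t x ^ 2 ≤ 2 * C₀ := by
    have : 0 ≤ √β * u t x ^ 2 := by positivity
    linarith
  constructor
  · simpa only [mul_pow, show (2 : ℝ) ^ 2 = 4 by norm_num] using
      pow_four_le_div_of_sqrt_mul_sq_le hβ hbound
  · simpa only [Real.sqrt_mul zero_le_two] using
      abs_le_sqrt_mul_rpow_of_sqrt_mul_sq_le hβ hbound

/-- `L^∞` bound `‖u(t,·)‖_∞ ≤ √2 C₀^{1/2} β^{-1/4}` for solutions of the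
Kudryashov–Sinelshchikov equation with the energy-preserving parameter choice. -/
theorem stmt_2
    (A ε β C₀ : ℝ) (hA : A ≠ 0) (hε : 0 < ε) (hβ : 0 < β) (hC₀pos : 0 < C₀)
    (u : ℝ → ℝ → ℝ)
    (hu : ContDiff ℝ (⊤ : ℕ∞) (Function.uncurry u))
    (hsupp : ∃ R > (0:ℝ), ∀ t x : ℝ, R ≤ |x| → u t x = 0)
    (hPDE : ∀ t : ℝ, 0 ≤ t → ∀ x : ℝ,
      deriv (fun τ => u τ x) t
        + A * u t x * deriv (u t) x
        + β * deriv (deriv (deriv (u t))) x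
        - (2 * A / 3) * β * deriv (fun y => u t y * deriv (deriv (u t)) y) x
        - (-(A / 3)) * β * deriv (u t) x * deriv (deriv (u t)) x
        - ε * deriv (deriv (u t)) x = 0)
    (hC₀ : (∫ x : ℝ, (u 0 x) ^ 2) + β * (∫ x : ℝ, (deriv (u 0) x) ^ 2) ≤ C₀) :
    ∀ t : ℝ, 0 ≤ t → ∀ x : ℝ,
      (u t x) ^ 4 ≤ 4 * C₀ ^ 2 / β ∧
      |u t x| ≤ Real.sqrt 2 * Real.sqrt C₀ * β ^ (-(1/4 : ℝ)) :=
  let ⟨R, _, hR⟩ := hsupp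
  fun t ht => stmt_2_general hε.le hβ (contDiff_infty.1 hu 3)
    ⟨R, fun s _ => hR s⟩ (fun s hs => hPDE s hs.1) hC₀ (T := t) ⟨ht, le_rfl⟩
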